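/- arXiv:2105.05142 — 2 statements merged into one kernel-verified Lean document; each statement's English description precedes it below -/
import Mathlib

section
/- Corollary: every liquid democracy game has a (1/2)-Nash equilibrium x with SW(x) ≥ (1/2) · OPT. -/
/-!
The welfare of a mixed profile is an average of welfares of pure profiles, so some pure profile `s`
is optimal. Commit every agent who votes in `s` to vote with probability at least `ε`, and let `x`
be a Nash equilibrium of this restricted game.

* For any strategy `y` of agent `i`, voting with probability `ε` and playing `y` otherwise respects
  the commitment. Utilities are nonnegative and affine in the agent's own strategy, so this mixture
  yields at least a `1 - ε` fraction of the utility of `y`: `x` is an `ε`-Nash equilibrium.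
* Let `w` be the guru of `i` in `s`. Choosing `w` directly respects the commitment of `i` (if `i` is
  committed then `w = i`) and yields at least `ε * u i w`, as `w` votes with probability at least
  `ε`. Hence every agent gets in `x` at least an `ε` fraction of her utility in `s`.

The restricted game is concave; its equilibrium comes from Brouwer's fixed point theorem by way of
Ky Fan's inequality. Brouwer's theorem follows from the nonexistence of a `C¹` retraction of a ball
onto its sphere, by the volume argument of Milnor and Rogers: the Jacobian of a retraction vanishes,
whereas its integral over the ball would have to be the volume of the ball.
-/

open Finset

/-- The guru of agent `i` under pure profile `s` (where `s i = some j` means `i`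
delegates to `j`, with `s i = some i` meaning `i` votes herself, and `s i = none`
meaning `i` abstains): follow delegation arcs for `n` steps; the endpoint is the
guru provided it votes itself. -/
def guru {n : ℕ} (s : Fin n → Option (Fin n)) (i : Fin n) : Option (Fin n) :=
  ((fun o => Option.bind o s)^[n] (some i)).bind
    (fun j => if s j = some j then some j else none)

/-- Utility of agent `i` in the pure profile `s`: `u i (g i)` if the guru exists, else `0`. -/
def pureUtil {n : ℕ} (u : Fin n → Fin n → ℝ) (s : Fin n → Option (Fin n)) (i : Fin n) : ℝ :=
  (guru s i).elim 0 (u i)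

/-- A mixed strategy for a single agent: nonnegative, total probability at most one
(the residual probability is abstention). -/
def IsStrat {n : ℕ} (y : Fin n → ℝ) : Prop := (∀ j, 0 ≤ y j) ∧ (∑ j, y j) ≤ 1

/-- A mixed strategy profile. -/
def IsMixed {n : ℕ} (x : Fin n → Fin n → ℝ) : Prop := ∀ i, IsStrat (x i)

/-- Probability that the independent randomization `x` produces the pure profile `s`. -/
def prob {n : ℕ} (x : Fin n → Fin n → ℝ) (s : Fin n → Option (Fin n)) : ℝ :=
  ∏ i, (s i).elim (1 - ∑ j, x i j) (x i)

/-- Expected utility of agent `i` under the mixed profile `x`. -/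
def util {n : ℕ} (u x : Fin n → Fin n → ℝ) (i : Fin n) : ℝ :=
  ∑ s : Fin n → Option (Fin n), prob x s * pureUtil u s i

/-- Expected social welfare of the mixed profile `x`. -/
def SW {n : ℕ} (u x : Fin n → Fin n → ℝ) : ℝ := ∑ i, util u x i

/-- The set of social-welfare values achievable by mixed profiles; `OPT` is its greatest element. -/
def SWvals {n : ℕ} (u : Fin n → Fin n → ℝ) : Set ℝ :=
  {w | ∃ x, IsMixed x ∧ w = SW u x}

/-- `x` is an `ε`-Nash equilibrium. -/
def EpsNash {n : ℕ} (u : Fin n → Fin n → ℝ) (ε : ℝ) (x : Fin n → Fin n → ℝ) : Prop :=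
  ∀ i y, IsStrat y → util u x i ≥ (1 - ε) * util u (Function.update x i y) i

/-- `x` is an (exact, mixed) Nash equilibrium. -/
def NashEq {n : ℕ} (u x : Fin n → Fin n → ℝ) : Prop :=
  ∀ i y, IsStrat y → util u x i ≥ util u (Function.update x i y) i

section Brouwer

open MeasureTheory Metric Filter Topology
open scoped RealInnerProductSpace NNReal Polynomial

theorem exists_polynomial_eval_eq_det_one_add_smul {R M : Type*} [CommRing R] [Nontrivial R]
    [AddCommGroup M] [Module R M] [Module.Free R M] [Module.Finite R M] (A : M →ₗ[R] M) :
    ∃ p : R[X], p.natDegree ≤ Module.finrank R M ∧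
      ∀ t : R, p.eval t = LinearMap.det (1 + t • A) := by
  let b := Module.finBasis R M
  let B := LinearMap.toMatrix b b A
  refine ⟨((Polynomial.X : R[X]) • B.map Polynomial.C + (1 : Matrix _ _ R).map Polynomial.C).det,
    by simpa using Polynomial.natDegree_det_X_add_C_le B 1, fun t => ?_⟩
  rw [← LinearMap.det_toMatrix b, ← Polynomial.coe_evalRingHom, RingHom.map_det]
  congr 1
  ext i j
  simp only [RingHom.mapMatrix_apply, Matrix.map_apply, Matrix.add_apply, Matrix.smul_apply,
    Polynomial.coe_evalRingHom, smul_eq_mul, Polynomial.eval_mul, Polynomial.eval_X,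
    Polynomial.eval_C, map_add, map_smul, LinearMap.toMatrix_one, B]
  exact add_comm _ _

theorem integral_eval_eq_of_infinite {α : Type*} [MeasurableSpace α] {μ : Measure α}
    {p : α → ℝ[X]} {d : ℕ} (hd : ∀ x, (p x).natDegree ≤ d) {S : Set ℝ} (hS : S.Infinite)
    (hint : ∀ t ∈ S, Integrable (fun x => (p x).eval t) μ) {c : ℝ}
    (hc : ∀ t ∈ S, ∫ x, (p x).eval t ∂μ = c) (t : ℝ) : ∫ x, (p x).eval t ∂μ = c := by
  obtain ⟨N, hNS, hN⟩ := hS.exists_subset_card_eq (d + 1)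
  let w : ℝ → ℝ := fun a => (Lagrange.basis N id a).eval t
  have hw : ∑ a ∈ N, w a = 1 := by
    have hne : N.Nonempty := by
      rw [← card_pos]
      omega
    rw [← Polynomial.eval_finsetSum, Lagrange.sum_basis Function.injective_id.injOn hne,
      Polynomial.eval_one]
  have hinterp (x : α) : (p x).eval t = ∑ a ∈ N, (p x).eval a * w a := by
    have hdeg : (p x).degree < #N := by
      rw [hN]
      exact Polynomial.degree_le_natDegree.trans_lt (mod_cast Nat.lt_succ_of_le (hd x))
    nth_rw 1 [Lagrange.eq_interpolate Function.injective_id.injOn hdeg]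
    simp [Lagrange.interpolate_apply, Polynomial.eval_finsetSum, w]
  calc ∫ x, (p x).eval t ∂μ
      = ∑ a ∈ N, (∫ x, (p x).eval a ∂μ) * w a := by
        simp_rw [hinterp, ← integral_mul_const]
        exact integral_finsetSum _ fun a ha => (hint a (hNS ha)).mul_const _
    _ = ∑ a ∈ N, c * w a := sum_congr rfl fun a ha => by rw [hc a (hNS ha)]
    _ = c := by rw [← mul_sum, hw, mul_one]

theorem bijective_id_add_of_lipschitzWith {E : Type*} [NormedAddCommGroup E] [CompleteSpace E]
    {φ : E → E} {c : ℝ≥0} (hc : c < 1) (hφ : LipschitzWith c φ) :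
    Function.Bijective fun x => x + φ x := by
  refine (Function.bijective_iff_existsUnique _).2 fun y => ?_
  have hcontr : ContractingWith c fun x => y - φ x :=
    ⟨hc, by simpa using (LipschitzWith.const y).sub hφ⟩
  refine ⟨hcontr.fixedPoint, ?_, fun x hx => hcontr.fixedPoint_unique ?_⟩
  · exact eq_sub_iff_add_eq.1 hcontr.fixedPoint_isFixedPt.eq.symm
  · exact (eq_sub_iff_add_eq.2 hx).symm

variable {E : Type*} [NormedAddCommGroup E] [InnerProductSpace ℝ E]

/-- `P` is the metric projection onto the convex set `K`, encoded by its variational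
characterization: the angle at `P x` between `x` and any point of `K` is not acute. -/
def IsConvexProjection (K : Set E) (P : E → E) : Prop :=
  ∀ x, P x ∈ K ∧ ∀ y ∈ K, ⟪x - P x, y - P x⟫ ≤ 0

theorem exists_isConvexProjection {K : Set E} (hne : K.Nonempty) (hK : IsComplete K)
    (hconv : Convex ℝ K) : ∃ P, IsConvexProjection K P := by
  choose P hP hmin using exists_norm_eq_iInf_of_complete_convex hne hK hconv
  exact ⟨P, fun x => ⟨hP x, (norm_eq_iInf_iff_real_inner_le_zero hconv (hP x)).1 (hmin x)⟩⟩

namespace IsConvexProjection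

variable {K : Set E} {P : E → E}

theorem lipschitzWith (hP : IsConvexProjection K P) : LipschitzWith 1 P := by
  refine LipschitzWith.of_dist_le_mul fun x y => ?_
  rw [dist_eq_norm, dist_eq_norm, NNReal.coe_one, one_mul]
  have hsq : ‖P x - P y‖ ^ 2 ≤ ‖x - y‖ * ‖P x - P y‖ := by
    refine le_trans ?_ (real_inner_le_norm (x - y) (P x - P y))
    have hx := (hP x).2 (P y) (hP y).1
    have hy := (hP y).2 (P x) (hP x).1
    rw [← real_inner_self_eq_norm_sq]
    simp only [inner_sub_left, inner_sub_right] at hx hy ⊢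
    linarith
  rcases (norm_nonneg (P x - P y)).eq_or_lt with h0 | hpos
  · exact h0 ▸ norm_nonneg _
  · exact le_of_mul_le_mul_right (by rwa [← sq]) hpos

theorem eq_self_of_mem (hP : IsConvexProjection K P) {x : E} (hx : x ∈ K) : P x = x := by
  have h : ‖x - P x‖ ^ 2 ≤ 0 := by
    simpa only [real_inner_self_eq_norm_sq] using (hP x).2 x hx
  exact (sub_eq_zero.1 (norm_eq_zero.1 (by simpa using h))).symm

theorem mem_frontier_of_notMem (hP : IsConvexProjection K P) {x : E} (hx : x ∉ K) :
    P x ∈ frontier K := by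
  refine ⟨subset_closure (hP x).1, fun hint => hx ?_⟩
  have hnear : ∀ᶠ s : ℝ in 𝓝 0, P x + s • (x - P x) ∈ K := by
    refine Tendsto.eventually_mem (Continuous.tendsto' (by fun_prop) 0 (P x) (by simp)) ?_
    exact mem_interior_iff_mem_nhds.1 hint
  obtain ⟨s, hsK, hs⟩ := ((hnear.filter_mono nhdsWithin_le_nhds).and
    (self_mem_nhdsWithin : Set.Ioi (0 : ℝ) ∈ 𝓝[>] 0)).exists
  have hsq : s * ‖x - P x‖ ^ 2 ≤ 0 := by
    simpa [inner_smul_right] using (hP x).2 _ hsK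
  have hx0 : ‖x - P x‖ = 0 := pow_eq_zero_iff two_ne_zero |>.1
    (le_antisymm (nonpos_of_mul_nonpos_right hsq hs) (sq_nonneg _))
  rw [sub_eq_zero.1 (norm_eq_zero.1 hx0)]
  exact (hP x).1

end IsConvexProjection

theorem bijOn_id_add_of_lipschitzOnWith [CompleteSpace E] {K : Set E} (hK : IsClosed K)
    (hconv : Convex ℝ K) {g : E → E} {c : ℝ≥0} (hc : c < 1) (hg : LipschitzOnWith c g K)
    (hg0 : ∀ x ∈ frontier K, g x = 0) : Set.BijOn (fun x => x + g x) K K := by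
  rcases K.eq_empty_or_nonempty with rfl | hne
  · exact Set.bijOn_empty _
  obtain ⟨P, hP⟩ := exists_isConvexProjection hne hK.isComplete hconv
  -- Composed with `P`, the perturbation is contracting on all of `E` and vanishes outside `K`.
  have hbij : Function.Bijective fun x => x + g (P x) := by
    refine bijective_id_add_of_lipschitzWith (φ := g ∘ P) hc ?_
    rw [← lipschitzOnWith_univ]
    simpa using hg.comp (hP.lipschitzWith.lipschitzOnWith (s := Set.univ)) fun x _ => (hP x).1
  have hout : Set.EqOn (fun x => x + g (P x)) id Kᶜ := fun x hx => by
    simp [hg0 _ (hP.mem_frontier_of_notMem hx)]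
  have hin : Set.EqOn (fun x => x + g (P x)) (fun x => x + g x) K := fun x hx => by
    simp [hP.eq_self_of_mem hx]
  refine Set.BijOn.congr ?_ hin
  have himage : (fun x => x + g (P x)) '' K = K := by
    rw [← compl_inj_iff, ← Set.image_compl_eq hbij, hout.image_eq, Set.image_id]
  simpa only [himage] using (hbij.injective.injOn (s := K)).bijOn_image

variable [FiniteDimensional ℝ E]

section Volume

variable [MeasurableSpace E] [BorelSpace E] (μ : Measure E) [μ.IsAddHaarMeasure]

theorem integral_det_eq_measureReal_image {K : Set E} (hK : MeasurableSet K) {f : E → E}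
    {f' : E → E →L[ℝ] E} (hf' : ∀ x ∈ K, HasFDerivWithinAt f (f' x) K x) (hinj : Set.InjOn f K)
    (hpos : ∀ x ∈ K, 0 ≤ (f' x).det) : ∫ x in K, (f' x).det ∂μ = μ.real (f '' K) := by
  have h := integral_image_eq_integral_abs_det_fderiv_smul μ hK hf' hinj fun _ => (1 : ℝ)
  rw [setIntegral_congr_fun hK fun x hx => by rw [abs_of_nonneg (hpos x hx)]] at h
  simpa using h.symm

theorem eventually_integral_det_one_add_smul_fderiv_eq {K : Set E} (hK : IsCompact K)
    (hconv : Convex ℝ K) {g : E → E} (hg : ContDiff ℝ 1 g) (hg0 : ∀ x ∈ frontier K, g x = 0) :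
    ∀ᶠ t in 𝓝 (0 : ℝ), ∫ x in K, (1 + t • fderiv ℝ g x).det ∂μ = μ.real K := by
  obtain ⟨L, hL⟩ := hg.locallyLipschitz.locallyLipschitzOn.exists_lipschitzOnWith_of_compact hK
  have hcontr : ∀ᶠ t : ℝ in 𝓝 0, ‖t‖₊ * L < 1 :=
    Tendsto.eventually_lt_const one_pos (Continuous.tendsto' (by fun_prop) _ _ (by simp))
  have hdet : Continuous fun q : ℝ × E => (1 + q.1 • fderiv ℝ g q.2).det :=
    ContinuousLinearMap.continuous_det.comp (continuous_const.add
      (continuous_fst.smul ((hg.continuous_fderiv one_ne_zero).comp continuous_snd)))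
  have hpos : ∀ᶠ t in 𝓝 (0 : ℝ), ∀ x ∈ K, 0 < (1 + t • fderiv ℝ g x).det :=
    hK.eventually_forall_of_forall_eventually fun x _ =>
      hdet.continuousAt.eventually_const_lt (by simp [ContinuousLinearMap.det])
  filter_upwards [hcontr, hpos] with t htL htpos
  have hbij : Set.BijOn (fun x => x + t • g x) K K :=
    bijOn_id_add_of_lipschitzOnWith hK.isClosed hconv htL
      ((lipschitzWith_smul t).comp_lipschitzOnWith hL) fun x hx => by simp [hg0 x hx]
  have hderiv (x : E) : HasFDerivAt (fun x => x + t • g x) (1 + t • fderiv ℝ g x) x :=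
    (hasFDerivAt_id x).add ((hg.differentiable one_ne_zero x).hasFDerivAt.const_smul t)
  rw [integral_det_eq_measureReal_image μ hK.measurableSet
    (fun x _ => (hderiv x).hasFDerivWithinAt) hbij.injOn fun x hx => (htpos x hx).le,
    hbij.image_eq]

/-- With `h = id + g`, the integral of the Jacobian of `id + t • g` is polynomial in `t` and equal
to the volume of `K` for small `t`, hence also for `t = 1`. -/
theorem integral_det_fderiv_eq_of_eqOn_frontier {K : Set E} (hK : IsCompact K)
    (hconv : Convex ℝ K) {h : E → E} (hh : ContDiff ℝ 1 h) (hid : Set.EqOn h id (frontier K)) :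
    ∫ x in K, (fderiv ℝ h x).det ∂μ = μ.real K := by
  let g : E → E := fun x => h x - x
  have hg : ContDiff ℝ 1 g := hh.sub contDiff_id
  have hsmall := eventually_integral_det_one_add_smul_fderiv_eq μ hK hconv hg
    fun x hx => sub_eq_zero.2 (hid hx)
  have hfderiv (x : E) : fderiv ℝ h x = 1 + (1 : ℝ) • fderiv ℝ g x := by
    have hgx : fderiv ℝ g x = fderiv ℝ h x - 1 :=
      ((hh.differentiable one_ne_zero x).hasFDerivAt.sub (hasFDerivAt_id x)).fderiv
    rw [hgx, one_smul, add_sub_cancel]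
  choose p hpdeg hp using fun x =>
    exists_polynomial_eval_eq_det_one_add_smul (fderiv ℝ g x : E →ₗ[ℝ] E)
  have hpdet (t : ℝ) : (fun x => (p x).eval t) = fun x => (1 + t • fderiv ℝ g x).det :=
    funext fun x => hp x t
  simp_rw [hfderiv, ← hpdet 1]
  refine integral_eval_eq_of_infinite hpdeg (infinite_of_mem_nhds 0 hsmall) (fun t _ => ?_)
    (fun t ht => ?_) 1
  · rw [hpdet]
    exact (ContinuousLinearMap.continuous_det.comp (continuous_const.add
      ((hg.continuous_fderiv one_ne_zero).const_smul t))).continuousOn.integrableOn_compact hK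
  · rw [hpdet]
    exact ht

end Volume

theorem det_fderiv_eq_zero_of_eventually_norm_eq {r : E → E} {x : E}
    (hr : DifferentiableAt ℝ r x) (hx : r x ≠ 0) (hnorm : ∀ᶠ y in 𝓝 x, ‖r y‖ = ‖r x‖) :
    (fderiv ℝ r x).det = 0 := by
  have horth (v : E) : ⟪r x, fderiv ℝ r x v⟫ = 0 := by
    have hconst : HasFDerivAt (fun y => ‖r y‖ ^ 2) (0 : E →L[ℝ] ℝ) x :=
      (hasFDerivAt_const (‖r x‖ ^ 2) x).congr_of_eventuallyEq
        (hnorm.mono fun y hy => by simp only [hy])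
    simpa using congrArg (fun T : E →L[ℝ] ℝ => T v) (hr.hasFDerivAt.norm_sq.unique hconst)
  by_contra hdet
  obtain ⟨v, hv⟩ := (LinearMap.equivOfDetNeZero (fderiv ℝ r x : E →ₗ[ℝ] E) hdet).surjective (r x)
  have hv' : fderiv ℝ r x v = r x := hv
  exact hx (inner_self_eq_zero.1 (hv' ▸ horth v :))

theorem not_contDiff_retraction_sphere {R : ℝ} (hR : 0 < R) {r : E → E}
    (hid : Set.EqOn r id (sphere 0 R)) (hmaps : Set.MapsTo r (closedBall 0 R) (sphere 0 R)) :
    ¬ ContDiff ℝ 1 r := by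
  intro hr
  borelize E
  have hnorm : ∀ x ∈ ball (0 : E) R, ‖r x‖ = R := fun x hx => by
    simpa using hmaps (ball_subset_closedBall hx)
  have hzero : Set.EqOn (fun x => (fderiv ℝ r x).det) 0 (ball 0 R) := fun x hx => by
    refine det_fderiv_eq_zero_of_eventually_norm_eq (hr.differentiable one_ne_zero x)
      (norm_pos_iff.1 (hnorm x hx ▸ hR)) ?_
    filter_upwards [isOpen_ball.mem_nhds hx] with y hy
    rw [hnorm y hy, hnorm x hx]
  have hzero' : Set.EqOn (fun x => (fderiv ℝ r x).det) 0 (closedBall 0 R) := by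
    rw [← closure_ball (0 : E) hR.ne']
    exact hzero.closure (ContinuousLinearMap.continuous_det.comp
      (hr.continuous_fderiv one_ne_zero)) continuous_const
  have hvol := integral_det_fderiv_eq_of_eqOn_frontier (Measure.addHaar : Measure E)
    (isCompact_closedBall 0 R) (convex_closedBall 0 R) hr
    (hid.mono frontier_closedBall_subset_sphere)
  rw [setIntegral_congr_fun measurableSet_closedBall hzero'] at hvol
  have hpos : 0 < (Measure.addHaar : Measure E).real (closedBall 0 R) :=
    ENNReal.toReal_pos (measure_closedBall_pos _ 0 hR).ne' measure_closedBall_lt_top.ne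
  simp [← hvol] at hpos

/-- Cut `f` off by a bump function `χ`. If `x - χ x • f x` had no zero, normalizing it would
retract the ball of radius `2 * M` onto its sphere. -/
theorem exists_fixedPoint_of_contDiff {M : ℝ} (hM : 0 < M) {f : E → E} (hf : ContDiff ℝ 1 f)
    (hbd : ∀ x, ‖f x‖ ≤ M) : ∃ x, f x = x := by
  by_contra! hfix
  let χ : ContDiffBump (0 : E) := ⟨M, 2 * M, hM, by linarith⟩
  let h : E → E := fun x => x - χ x • f x
  have hne : ∀ x, h x ≠ 0 := fun x hx => by
    have hx' : x = χ x • f x := sub_eq_zero.1 hx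
    have hxM : ‖x‖ ≤ M := by
      rw [hx', norm_smul, Real.norm_of_nonneg χ.nonneg]
      exact (mul_le_of_le_one_left (norm_nonneg _) χ.le_one).trans (hbd x)
    rw [χ.one_of_mem_closedBall (by simpa using hxM), one_smul] at hx'
    exact hfix x hx'.symm
  have hsphere : ∀ x ∈ sphere (0 : E) (2 * M), h x = x := fun x hx => by
    have hχ : χ x = 0 := χ.zero_of_le_dist (mem_sphere.1 hx).ge
    simp [h, hχ]
  have hh : ContDiff ℝ 1 h := contDiff_id.sub (χ.contDiff.smul hf)
  refine not_contDiff_retraction_sphere (R := 2 * M) (by positivity)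
    (r := fun x => (2 * M * ‖h x‖⁻¹) • h x) (fun x hx => ?_) (fun x _ => ?_)
    ((contDiff_const.mul ((hh.norm ℝ hne).inv fun x => norm_ne_zero_iff.2 (hne x))).smul hh)
  · dsimp only
    rw [hsphere x hx, mem_sphere_zero_iff_norm.1 hx, mul_inv_cancel₀ (by positivity), one_smul,
      id]
  · have hhx : ‖h x‖ ≠ 0 := norm_ne_zero_iff.2 (hne x)
    simp [norm_smul, hhx, abs_of_pos hM]

theorem exists_fixedPoint_of_uniformContinuous {M : ℝ} (hM : 0 < M) {f : E → E}
    (hf : UniformContinuous f) (hbd : ∀ x, ‖f x‖ ≤ M) : ∃ x, f x = x := by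
  obtain ⟨x, -, hmin⟩ := (isCompact_closedBall (0 : E) (M + 1)).exists_isMinOn
    (nonempty_closedBall.2 (by positivity)) (f := fun x => ‖f x - x‖)
    (hf.continuous.sub continuous_id).norm.continuousOn
  refine ⟨x, ?_⟩
  by_contra! hne
  have hgap : 0 < ‖f x - x‖ := norm_pos_iff.2 (sub_ne_zero.2 hne)
  obtain ⟨g, hg, hgf⟩ := hf.exists_contDiff_dist_le (lt_min one_pos hgap)
  have hgbd (y : E) : ‖g y‖ ≤ M + 1 := by
    have hdist := (hgf y).trans_le (min_le_left _ _)
    rw [dist_eq_norm] at hdist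
    linarith [norm_sub_norm_le (g y) (f y), hbd y]
  obtain ⟨y, hy⟩ := exists_fixedPoint_of_contDiff (by positivity) (hg.of_le (mod_cast le_top)) hgbd
  have hlt : ‖f y - y‖ < ‖f x - x‖ := by
    have hdist := (hgf y).trans_le (min_le_right _ _)
    rwa [hy, dist_comm, dist_eq_norm] at hdist
  exact hlt.not_ge (hmin (by simpa [hy] using hgbd y))

theorem exists_fixedPoint_of_mapsTo_convex {K : Set E} (hne : K.Nonempty) (hK : IsCompact K)
    (hconv : Convex ℝ K) {f : E → E} (hf : ContinuousOn f K) (hmaps : Set.MapsTo f K K) :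
    ∃ x ∈ K, f x = x := by
  obtain ⟨P, hP⟩ := exists_isConvexProjection hne hK.isComplete hconv
  obtain ⟨M, hM, hbd⟩ := hK.isBounded.exists_pos_norm_le
  have huc : UniformContinuous fun x => f (P x) := by
    rw [← uniformContinuousOn_univ]
    exact (hK.uniformContinuousOn_of_continuous hf).comp
      hP.lipschitzWith.uniformContinuous.uniformContinuousOn fun x _ => (hP x).1
  obtain ⟨x, hx⟩ := exists_fixedPoint_of_uniformContinuous hM huc
    fun x => hbd _ (hmaps (hP x).1)
  have hxK : x ∈ K := hx ▸ hmaps (hP x).1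
  exact ⟨x, hxK, by rwa [hP.eq_self_of_mem hxK] at hx⟩

end Brouwer

section Equilibrium

open Function

theorem brouwer_fixedPoint {V : Type*} [AddCommGroup V] [Module ℝ V] [TopologicalSpace V]
    [IsTopologicalAddGroup V] [ContinuousSMul ℝ V] [T2Space V] [FiniteDimensional ℝ V]
    {K : Set V} (hne : K.Nonempty) (hK : IsCompact K) (hconv : Convex ℝ K) {f : V → V}
    (hf : ContinuousOn f K) (hmaps : Set.MapsTo f K K) : ∃ x ∈ K, f x = x := by
  let e := toEuclidean (E := V)
  have hpre : Set.MapsTo e.symm (e '' K) K := by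
    rintro _ ⟨x, hx, rfl⟩
    simpa using hx
  obtain ⟨_, ⟨x, hx, rfl⟩, hfix⟩ := exists_fixedPoint_of_mapsTo_convex (hne.image e)
    (hK.image e.continuous) (hconv.linear_image e.toLinearMap)
    (f := fun z => e (f (e.symm z)))
    (e.continuous.comp_continuousOn (hf.comp e.symm.continuous.continuousOn hpre))
    fun z hz => Set.mem_image_of_mem e (hmaps (hpre hz))
  exact ⟨x, hx, by simpa using hfix⟩

/-- If every `x ∈ K` had a `y` with `φ x y > 0`, finitely many `y` would suffice by compactness.
Brouwer's theorem yields a fixed point of the map sending `x` to the average of these `y` with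
weights `max (φ x y) 0`, and concavity at this point contradicts `φ x x ≤ 0`. -/
theorem ky_fan_inequality {V : Type*} [AddCommGroup V] [Module ℝ V] [TopologicalSpace V]
    [IsTopologicalAddGroup V] [ContinuousSMul ℝ V] [T2Space V] [FiniteDimensional ℝ V]
    {K : Set V} (hne : K.Nonempty) (hK : IsCompact K) (hconv : Convex ℝ K) {φ : V → V → ℝ}
    (hcont : ∀ y ∈ K, ContinuousOn (fun x => φ x y) K) (hconc : ∀ x ∈ K, ConcaveOn ℝ K (φ x))
    (hdiag : ∀ x ∈ K, φ x x ≤ 0) : ∃ x ∈ K, ∀ y ∈ K, φ x y ≤ 0 := by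
  by_contra! hbad
  choose! y hyK hy using hbad
  obtain ⟨T, hTK, hcover⟩ := hK.elim_nhdsWithin_subcover (fun z => {x | 0 < φ x (y z)})
    fun z hz => (hcont (y z) (hyK z hz) z hz).eventually_const_lt (hy z hz)
  let a : V → V → ℝ := fun x z => max (φ x (y z)) 0
  have ha (x : V) : ∀ z ∈ T, 0 ≤ a x z := fun z _ => le_max_right _ _
  have hacont : ∀ z ∈ T, ContinuousOn (fun x => a x z) K := fun z hz =>
    (hcont (y z) (hyK z (hTK z hz))).sup continuousOn_const
  have hactive : ∀ x ∈ K, ∃ z ∈ T, 0 < φ x (y z) := fun x hx => by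
    obtain ⟨z, hzT, hz⟩ := Set.mem_iUnion₂.1 (hcover hx)
    exact ⟨z, hzT, hz⟩
  have hsum : ∀ x ∈ K, 0 < ∑ z ∈ T, a x z := fun x hx => by
    obtain ⟨z, hzT, hz⟩ := hactive x hx
    exact sum_pos' (ha x) ⟨z, hzT, lt_max_of_lt_left hz⟩
  have hyT : ∀ z ∈ T, y z ∈ K := fun z hz => hyK z (hTK z hz)
  obtain ⟨x, hx, hfix⟩ := brouwer_fixedPoint hne hK hconv (f := fun x => T.centerMass (a x) y)
    (((continuousOn_finsetSum _ hacont).inv₀ fun x hx => (hsum x hx).ne').smul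
      (continuousOn_finsetSum _ fun z hz => (hacont z hz).smul continuousOn_const))
    fun x hx => hconv.centerMass_mem (ha x) (hsum x hx) hyT
  have hjensen : T.centerMass (a x) (φ x ∘ y) ≤ φ x x := by
    conv_rhs => rw [← hfix]
    simpa only [hfix] using (hconc x hx).le_map_centerMass (ha x) (hsum x hx) hyT
  have hpos : 0 < T.centerMass (a x) (φ x ∘ y) := by
    refine smul_pos (inv_pos.2 (hsum x hx)) ?_
    obtain ⟨z, hzT, hz⟩ := hactive x hx
    refine sum_pos' (fun z _ => ?_) ⟨z, hzT, by simp [a, hz]⟩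
    rcases le_total (φ x (y z)) 0 with hz | hz
    · simp [a, hz]
    · simp [a, hz, mul_self_nonneg]
  exact (hpos.trans_le hjensen).not_ge (hdiag x hx)

theorem exists_equilibrium_of_concaveOn {ι : Type*} [Finite ι] [DecidableEq ι] {V : ι → Type*}
    [∀ i, AddCommGroup (V i)] [∀ i, Module ℝ (V i)] [∀ i, TopologicalSpace (V i)]
    [∀ i, IsTopologicalAddGroup (V i)] [∀ i, ContinuousSMul ℝ (V i)] [∀ i, T2Space (V i)]
    [∀ i, FiniteDimensional ℝ (V i)] {K : ∀ i, Set (V i)} (hne : ∀ i, (K i).Nonempty)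
    (hK : ∀ i, IsCompact (K i)) (hconv : ∀ i, Convex ℝ (K i)) {U : ι → (∀ i, V i) → ℝ}
    (hcont : ∀ i, ContinuousOn (U i) (Set.univ.pi K))
    (hconc : ∀ x ∈ Set.univ.pi K, ∀ i, ConcaveOn ℝ (K i) fun y => U i (update x i y)) :
    ∃ x ∈ Set.univ.pi K, ∀ i, ∀ y ∈ K i, U i (update x i y) ≤ U i x := by
  have := Fintype.ofFinite ι
  let φ : (∀ i, V i) → (∀ i, V i) → ℝ := fun x y => ∑ i, (U i (update x i (y i)) - U i x)
  have hupdate : ∀ x ∈ Set.univ.pi K, ∀ i, ∀ y ∈ K i, update x i y ∈ Set.univ.pi K :=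
    fun x hx i y hy => Set.update_mem_pi_iff_of_mem hx |>.2 fun _ => hy
  have hφcont : ∀ y ∈ Set.univ.pi K, ContinuousOn (fun x => φ x y) (Set.univ.pi K) := fun y hy =>
    continuousOn_finsetSum _ fun i _ =>
      ((hcont i).comp (by fun_prop) fun x hx => hupdate x hx i (y i) (hy i trivial)).sub (hcont i)
  have hφconc : ∀ x ∈ Set.univ.pi K, ConcaveOn ℝ (Set.univ.pi K) (φ x) := fun x hx => by
    refine ⟨convex_pi fun i _ => hconv i, fun y hy z hz a b ha hb hab => ?_⟩
    calc a • φ x y + b • φ x z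
        = ∑ i, (a • U i (update x i (y i)) + b • U i (update x i (z i)) - U i x) := by
          simp only [φ, smul_sum]
          rw [← sum_add_distrib]
          refine sum_congr rfl fun i _ => ?_
          simp only [smul_eq_mul]
          linear_combination (-U i x) * hab
      _ ≤ φ x (a • y + b • z) := sum_le_sum fun i _ => sub_le_sub_right
          ((hconc x hx i).2 (hy i trivial) (hz i trivial) ha hb hab) _
  obtain ⟨x, hx, hmax⟩ := ky_fan_inequality (Set.univ_pi_nonempty_iff.2 hne)
    (isCompact_univ_pi hK) (convex_pi fun i _ => hconv i) hφcont hφconc fun x _ => by simp [φ]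
  refine ⟨x, hx, fun i y hy => ?_⟩
  have hdev := hmax (update x i y) (hupdate x hx i y hy)
  simp only [φ] at hdev
  rw [sum_eq_single i (fun k _ hk => by simp [hk]) (by simp)] at hdev
  simpa using hdev

end Equilibrium

section Game

open Function

variable {n : ℕ}

theorem iterate_bind_of_voter {s : Fin n → Option (Fin n)} {w : Fin n} (hw : s w = some w)
    (m : ℕ) : (fun o => Option.bind o s)^[m] (some w) = some w :=
  iterate_fixed (by simpa using hw) m

theorem guru_eq_of_delegate {s : Fin n → Option (Fin n)} {i w : Fin n} (hi : s i = some w)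
    (hw : s w = some w) : guru s i = some w := by
  obtain ⟨m, rfl⟩ : ∃ m, n = m + 1 := Nat.exists_eq_succ_of_ne_zero i.pos.ne'
  simp only [guru, iterate_succ_apply, Option.bind_some, hi, iterate_bind_of_voter hw, if_pos hw]

theorem voter_of_guru_eq {s : Fin n → Option (Fin n)} {i w : Fin n} (h : guru s i = some w) :
    s w = some w := by
  obtain ⟨j, -, hj⟩ := Option.bind_eq_some_iff.1 h
  split_ifs at hj with hs
  exact Option.some_injective _ hj ▸ hs

theorem pureUtil_nonneg {u : Fin n → Fin n → ℝ} (hu : ∀ i j, 0 ≤ u i j)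
    (s : Fin n → Option (Fin n)) (i : Fin n) : 0 ≤ pureUtil u s i := by
  unfold pureUtil
  cases guru s i with
  | none => exact le_rfl
  | some j => exact hu i j

/-- The probability that the mixed strategy `y` gives to the pure strategy `o`, where `none` is
abstention. -/
def choiceProb (y : Fin n → ℝ) (o : Option (Fin n)) : ℝ := o.elim (1 - ∑ j, y j) y

/-- The pure strategy `o` as a mixed strategy; abstention (`none`) is the zero vector. -/
def pureStrat (o : Option (Fin n)) : Fin n → ℝ := o.elim 0 fun j => Pi.single j 1

theorem choiceProb_nonneg {y : Fin n → ℝ} (hy : IsStrat y) (o : Option (Fin n)) :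
    0 ≤ choiceProb y o := by
  cases o with
  | none => exact sub_nonneg.2 hy.2
  | some j => exact hy.1 j

theorem sum_choiceProb (y : Fin n → ℝ) : ∑ o, choiceProb y o = 1 := by
  simp [Fintype.sum_option, choiceProb]

theorem choiceProb_pureStrat (o o' : Option (Fin n)) :
    choiceProb (pureStrat o) o' = if o' = o then 1 else 0 := by
  cases o <;> cases o' <;> simp [choiceProb, pureStrat, Pi.single_apply]

theorem choiceProb_smul_add_smul {a b : ℝ} (hab : a + b = 1) (y z : Fin n → ℝ)
    (o : Option (Fin n)) :
    choiceProb (a • y + b • z) o = a * choiceProb y o + b * choiceProb z o := by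
  cases o with
  | none =>
    simp only [choiceProb, Option.elim_none, Pi.add_apply, Pi.smul_apply, smul_eq_mul,
      sum_add_distrib, ← mul_sum]
    linear_combination -hab
  | some j => rfl

theorem isStrat_pureStrat (o : Option (Fin n)) : IsStrat (pureStrat o) := by
  cases o with
  | none => simp [IsStrat, pureStrat]
  | some j =>
    have hnonneg : (0 : Fin n → ℝ) ≤ Pi.single j 1 := Pi.single_nonneg.2 zero_le_one
    exact ⟨hnonneg, by simp [pureStrat]⟩

theorem convex_setOf_isStrat : Convex ℝ {y : Fin n → ℝ | IsStrat y} := by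
  refine fun y hy z hz a b ha hb hab => ⟨fun j => ?_, ?_⟩
  · exact add_nonneg (mul_nonneg ha (hy.1 j)) (mul_nonneg hb (hz.1 j))
  · simp only [Pi.add_apply, Pi.smul_apply, smul_eq_mul, sum_add_distrib, ← mul_sum]
    exact convex_Iic (1 : ℝ) hy.2 hz.2 ha hb hab

theorem isMixed_update {x : Fin n → Fin n → ℝ} (hx : IsMixed x) (k : Fin n) {y : Fin n → ℝ}
    (hy : IsStrat y) : IsMixed (update x k y) :=
  (forall_update_iff x fun _ z => IsStrat z).2 ⟨hy, fun i _ => hx i⟩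

theorem prob_nonneg {x : Fin n → Fin n → ℝ} (hx : IsMixed x) (s : Fin n → Option (Fin n)) :
    0 ≤ prob x s := prod_nonneg fun i _ => choiceProb_nonneg (hx i) (s i)

theorem sum_prob (x : Fin n → Fin n → ℝ) : ∑ s, prob x s = 1 := by
  calc ∑ s, prob x s = ∏ i, ∑ o, choiceProb (x i) o := by
        rw [prod_univ_sum, Fintype.piFinset_univ]
        rfl
    _ = 1 := prod_eq_one fun i _ => sum_choiceProb (x i)

theorem prob_eq_zero_of_ne {x : Fin n → Fin n → ℝ} {k : Fin n} {o : Option (Fin n)}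
    (hk : x k = pureStrat o) {s : Fin n → Option (Fin n)} (hs : s k ≠ o) : prob x s = 0 := by
  refine prod_eq_zero (mem_univ k) ?_
  change choiceProb (x k) (s k) = 0
  rw [hk, choiceProb_pureStrat, if_neg hs]

theorem prob_update (x : Fin n → Fin n → ℝ) (k : Fin n) (y : Fin n → ℝ)
    (s : Fin n → Option (Fin n)) :
    prob (update x k y) s = choiceProb y (s k) * ∏ i ∈ univ.erase k, choiceProb (x i) (s i) := by
  change ∏ i, choiceProb (update x k y i) (s i) = _
  rw [← mul_prod_erase univ _ (mem_univ k), update_self]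
  congr 1
  exact prod_congr rfl fun i hi => by rw [update_of_ne (ne_of_mem_erase hi)]

theorem util_nonneg {u x : Fin n → Fin n → ℝ} (hu : ∀ i j, 0 ≤ u i j) (hx : IsMixed x)
    (i : Fin n) : 0 ≤ util u x i :=
  sum_nonneg fun s _ => mul_nonneg (prob_nonneg hx s) (pureUtil_nonneg hu s i)

theorem util_of_delegate (u : Fin n → Fin n → ℝ) {x : Fin n → Fin n → ℝ} {i w : Fin n}
    (hi : x i = pureStrat (some w)) (hw : x w = pureStrat (some w)) : util u x i = u i w := by
  have hterm (s : Fin n → Option (Fin n)) : prob x s * pureUtil u s i = prob x s * u i w := by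
    by_cases hsi : s i = some w
    · by_cases hsw : s w = some w
      · simp only [pureUtil, guru_eq_of_delegate hsi hsw, Option.elim_some]
      · simp only [prob_eq_zero_of_ne hw hsw, zero_mul]
    · simp only [prob_eq_zero_of_ne hi hsi, zero_mul]
  simp only [util, hterm, ← sum_mul, sum_prob, one_mul]

/-- Law of total expectation, conditioning on the choice of agent `k`. -/
theorem util_update (u x : Fin n → Fin n → ℝ) (i k : Fin n) (y : Fin n → ℝ) :
    util u (update x k y) i = ∑ o, choiceProb y o * util u (update x k (pureStrat o)) i := by
  have hprob (s : Fin n → Option (Fin n)) : prob (update x k y) s =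
      ∑ o, choiceProb y o * prob (update x k (pureStrat o)) s := by
    simp [prob_update, choiceProb_pureStrat]
  simp only [util, hprob, sum_mul, mul_sum, mul_assoc]
  exact sum_comm

theorem util_update_smul_add_smul (u x : Fin n → Fin n → ℝ) (i k : Fin n) {a b : ℝ}
    (hab : a + b = 1) (y z : Fin n → ℝ) : util u (update x k (a • y + b • z)) i =
      a * util u (update x k y) i + b * util u (update x k z) i := by
  rw [util_update, util_update u x i k y, util_update u x i k z]
  simp only [choiceProb_smul_add_smul hab, add_mul, sum_add_distrib, mul_sum, mul_assoc]

theorem choiceProb_mul_util_le {u x : Fin n → Fin n → ℝ} (hu : ∀ i j, 0 ≤ u i j)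
    (hx : IsMixed x) (i k : Fin n) (o : Option (Fin n)) :
    choiceProb (x k) o * util u (update x k (pureStrat o)) i ≤ util u x i := by
  conv_rhs => rw [← update_eq_self k x, util_update]
  exact single_le_sum
    (f := fun o => choiceProb (x k) o * util u (update x k (pureStrat o)) i)
    (fun o _ => mul_nonneg (choiceProb_nonneg (hx k) o)
      (util_nonneg hu (isMixed_update hx k (isStrat_pureStrat o)) i)) (mem_univ o)

theorem mul_le_util_update_delegate {u x : Fin n → Fin n → ℝ} (hu : ∀ i j, 0 ≤ u i j)
    (hx : IsMixed x) (i w : Fin n) :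
    x w w * u i w ≤ util u (update x i (pureStrat (some w))) i := by
  rcases eq_or_ne w i with rfl | hwi
  · have hle : x w w ≤ 1 := (single_le_sum (fun j _ => (hx w).1 j) (mem_univ w)).trans (hx w).2
    rw [util_of_delegate u (update_self ..) (update_self ..)]
    exact mul_le_of_le_one_left (hu w w) hle
  · have h := choiceProb_mul_util_le hu
      (isMixed_update hx i (isStrat_pureStrat (some w))) i w (some w)
    rwa [util_of_delegate u (by rw [update_of_ne hwi.symm, update_self]) (update_self ..),
      update_of_ne hwi] at h

theorem continuous_util (u : Fin n → Fin n → ℝ) (i : Fin n) :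
    Continuous fun x : Fin n → Fin n → ℝ => util u x i := by
  refine continuous_finsetSum _ fun s _ => Continuous.mul ?_ continuous_const
  refine continuous_finsetProd _ fun k _ => ?_
  cases s k with
  | none => simp only [Option.elim_none]; fun_prop
  | some j => simp only [Option.elim_some]; fun_prop

theorem exists_pure_forall_SW_le (u : Fin n → Fin n → ℝ) :
    ∃ s : Fin n → Option (Fin n), ∀ x, IsMixed x → SW u x ≤ ∑ i, pureUtil u s i := by
  obtain ⟨s, -, hs⟩ := exists_max_image univ
    (fun s : Fin n → Option (Fin n) => ∑ i, pureUtil u s i) univ_nonempty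
  refine ⟨s, fun x hx => ?_⟩
  calc SW u x = ∑ s', prob x s' * ∑ i, pureUtil u s' i := by
        simp only [SW, util, mul_sum]
        exact sum_comm
    _ ≤ ∑ s', prob x s' * ∑ i, pureUtil u s i :=
        sum_le_sum fun s' _ => mul_le_mul_of_nonneg_left (hs s' (mem_univ s')) (prob_nonneg hx s')
    _ = ∑ i, pureUtil u s i := by rw [← sum_mul, sum_prob, one_mul]

/-- The strategies left to agent `i` when every agent of `W` is committed to vote with probability
at least `ε`. -/
def committedStrat (W : Set (Fin n)) (ε : ℝ) (i : Fin n) : Set (Fin n → ℝ) :=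
  {y | IsStrat y ∧ (i ∈ W → ε ≤ y i)}

/-- `x` is a Nash equilibrium of the game in which every agent of `W` is committed to vote with
probability at least `ε`: only deviations that respect the commitment are considered. -/
def IsCommittedNash (u : Fin n → Fin n → ℝ) (W : Set (Fin n)) (ε : ℝ) (x : Fin n → Fin n → ℝ) :
    Prop :=
  ∀ i, x i ∈ committedStrat W ε i ∧
    ∀ y ∈ committedStrat W ε i, util u (update x i y) i ≤ util u x i

theorem pureStrat_self_mem_committedStrat (W : Set (Fin n)) {ε : ℝ} (hε : ε ≤ 1) (i : Fin n) :
    pureStrat (some i) ∈ committedStrat W ε i :=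
  ⟨isStrat_pureStrat _, fun _ => by simpa [pureStrat] using hε⟩

theorem convex_committedStrat (W : Set (Fin n)) (ε : ℝ) (i : Fin n) :
    Convex ℝ (committedStrat W ε i) := fun _ hy _ hz _ _ ha hb hab =>
  ⟨convex_setOf_isStrat hy.1 hz.1 ha hb hab,
    fun hi => convex_Ici ε (hy.2 hi) (hz.2 hi) ha hb hab⟩

theorem isCompact_committedStrat (W : Set (Fin n)) (ε : ℝ) (i : Fin n) :
    IsCompact (committedStrat W ε i) := by
  have hclosed : IsClosed (committedStrat W ε i) := by
    have hnonneg : IsClosed {y : Fin n → ℝ | ∀ j, 0 ≤ y j} := isClosed_Ici (a := 0)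
    have hsum : IsClosed {y : Fin n → ℝ | ∑ j, y j ≤ 1} :=
      isClosed_le (by fun_prop) continuous_const
    have hvote : IsClosed {y : Fin n → ℝ | i ∈ W → ε ≤ y i} :=
      isClosed_imp isOpen_const (isClosed_le continuous_const (continuous_apply i))
    exact (hnonneg.inter hsum).inter hvote
  refine (isCompact_Icc (a := (0 : Fin n → ℝ)) (b := 1)).of_isClosed_subset hclosed fun y hy => ?_
  exact ⟨hy.1.1, fun j => (single_le_sum (fun k _ => hy.1.1 k) (mem_univ j)).trans hy.1.2⟩

theorem exists_isCommittedNash (u : Fin n → Fin n → ℝ) (W : Set (Fin n)) {ε : ℝ} (hε : ε ≤ 1) :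
    ∃ x, IsCommittedNash u W ε x := by
  obtain ⟨x, hx, hmax⟩ := exists_equilibrium_of_concaveOn (K := committedStrat W ε)
    (U := fun i x => util u x i) (fun i => ⟨_, pureStrat_self_mem_committedStrat W hε i⟩)
    (isCompact_committedStrat W ε) (convex_committedStrat W ε)
    (fun i => (continuous_util u i).continuousOn) fun x _ i =>
      ⟨convex_committedStrat W ε i, fun y _ z _ a b _ _ hab =>
        (util_update_smul_add_smul u x i i hab y z).ge⟩
  exact ⟨x, fun i => ⟨hx i trivial, hmax i⟩⟩

namespace IsCommittedNash

variable {u x : Fin n → Fin n → ℝ} {W : Set (Fin n)} {ε : ℝ}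

theorem isMixed (hx : IsCommittedNash u W ε x) : IsMixed x := fun i => (hx i).1.1

theorem epsNash (hx : IsCommittedNash u W ε x) (hu : ∀ i j, 0 ≤ u i j) (hε0 : 0 ≤ ε)
    (hε1 : ε ≤ 1) : EpsNash u ε x := by
  intro i y hy
  have hmix : ε • pureStrat (some i) + (1 - ε) • y ∈ committedStrat W ε i := by
    refine ⟨convex_setOf_isStrat (isStrat_pureStrat _) hy hε0 (sub_nonneg.2 hε1)
      (add_sub_cancel ..), fun _ => ?_⟩
    simpa [pureStrat] using mul_nonneg (sub_nonneg.2 hε1) (hy.1 i)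
  have hvote : 0 ≤ util u (update x i (pureStrat (some i))) i :=
    util_nonneg hu (isMixed_update hx.isMixed i (isStrat_pureStrat _)) i
  calc (1 - ε) * util u (update x i y) i
      ≤ ε * util u (update x i (pureStrat (some i))) i + (1 - ε) * util u (update x i y) i :=
        le_add_of_nonneg_left (mul_nonneg hε0 hvote)
    _ = util u (update x i (ε • pureStrat (some i) + (1 - ε) • y)) i :=
        (util_update_smul_add_smul u x i i (add_sub_cancel ..) _ _).symm
    _ ≤ util u x i := (hx i).2 _ hmix

theorem mul_pureUtil_le_util {s : Fin n → Option (Fin n)}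
    (hx : IsCommittedNash u {w | s w = some w} ε x) (hu : ∀ i j, 0 ≤ u i j) (hε : ε ≤ 1)
    (i : Fin n) : ε * pureUtil u s i ≤ util u x i := by
  cases hguru : guru s i with
  | none => simpa [pureUtil, hguru] using util_nonneg hu hx.isMixed i
  | some w =>
    have hw : s w = some w := voter_of_guru_eq hguru
    have hadm : pureStrat (some w) ∈ committedStrat {w | s w = some w} ε i := by
      refine ⟨isStrat_pureStrat _, fun hi => ?_⟩
      have hiw : w = i := Option.some_injective _ (hguru.symm.trans (guru_eq_of_delegate hi hi))
      subst hiw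
      exact (pureStrat_self_mem_committedStrat _ hε w).2 hi
    calc ε * pureUtil u s i = ε * u i w := by simp only [pureUtil, hguru, Option.elim_some]
      _ ≤ x w w * u i w := mul_le_mul_of_nonneg_right ((hx w).1.2 hw) (hu i w)
      _ ≤ util u (update x i (pureStrat (some w))) i :=
          mul_le_util_update_delegate hu hx.isMixed i w
      _ ≤ util u x i := (hx i).2 _ hadm

end IsCommittedNash

end Game

theorem stmt10_general {n : ℕ} (u : Fin n → Fin n → ℝ) (hu : ∀ i j, 0 ≤ u i j) {ε : ℝ}
    (hε0 : 0 ≤ ε) (hε1 : ε ≤ 1) :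
    ∃ x, IsMixed x ∧ EpsNash u ε x ∧ ∀ w ∈ SWvals u, ε * w ≤ SW u x := by
  obtain ⟨s, hs⟩ := exists_pure_forall_SW_le u
  obtain ⟨x, hx⟩ := exists_isCommittedNash u {w | s w = some w} hε1
  refine ⟨x, hx.isMixed, hx.epsNash hu hε0 hε1, ?_⟩
  rintro _ ⟨z, hz, rfl⟩
  calc ε * SW u z ≤ ε * ∑ i, pureUtil u s i := mul_le_mul_of_nonneg_left (hs z hz) hε0
    _ = ∑ i, ε * pureUtil u s i := mul_sum ..
    _ ≤ SW u x := sum_le_sum fun i _ => hx.mul_pureUtil_le_util hu hε1 i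

/-- Corollary: every liquid democracy game has a (1/2)-Nash equilibrium with social
welfare at least (1/2) · OPT. -/
theorem stmt10 {n : ℕ} (u : Fin n → Fin n → ℝ) (hu : ∀ i j, 0 ≤ u i j ∧ u i j ≤ 1)
    (OPT : ℝ) (hOPT : IsGreatest (SWvals u) OPT) :
    ∃ x : Fin n → Fin n → ℝ, IsMixed x ∧ EpsNash u (1/2) x ∧
      SW u x ≥ (1/2) * OPT := by
  obtain ⟨x, hx, hNash, hSW⟩ :=
    stmt10_general u (fun i j => (hu i j).1) (ε := 1 / 2) (by norm_num) (by norm_num)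
  exact ⟨x, hx, hNash, hSW OPT hOPT.1⟩
end

section
/- Dominating set reduction: let G = (V, A) be a directed graph without self-loops on n vertices and k an integer, and consider the liquid democracy game on agent set V with utilities u_{ij} = 1 if (i,j) ∈ A and u_{ij} = 0 otherwise. Then G has a dominating set of size at most k (a set S ⊆ V with |S| ≤ k such that every vertex i ∉ S has an arc (i,j) ∈ A to some j ∈ S) if and only if the game has a pure strategy profile with social welfare at least n − k. -/
/-!
Every utility is `0` or `1`, so the welfare of a profile is `n` minus the number of agents with
utility `0`, and it suffices to see that the sets of agents with utility `0` are exactly the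
dominating sets. Everyone else has an arc to her guru, and a guru, being her own guru, has utility
`0` because there are no self-loops; so such a set is dominating. Conversely, if the members of a
dominating set vote and everyone else delegates to an out-neighbour among them, exactly the voters
have utility `0`.
-/

open Finset

section Guru

variable {n : ℕ} {s : Fin n → Option (Fin n)} {i g : Fin n}

lemma guru_eq_some_of_delegates_to_voter (hi : s i = some g) (hg : s g = some g) :
    guru s i = some g := by
  -- The first of the `n ≥ 1` steps reaches `g`, and the others stay there.
  obtain ⟨m, rfl⟩ : ∃ m, n = m + 1 := Nat.exists_eq_add_one.mpr i.pos
  have hstay : (fun o => Option.bind o s)^[m] (some g) = some g := Function.iterate_fixed hg m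
  simp only [guru, Function.iterate_succ_apply, Option.bind_some, hi, hstay, hg, if_true]

lemma votes_of_guru_eq_some (h : guru s i = some g) : s g = some g := by
  obtain ⟨j, -, hj⟩ := Option.bind_eq_some_iff.mp h
  obtain ⟨hvote, hjg⟩ := Option.ite_none_right_eq_some.mp hj
  rwa [Option.some.inj hjg] at hvote

lemma guru_eq_some_self_of_guru_eq_some (h : guru s i = some g) : guru s g = some g :=
  have hvote := votes_of_guru_eq_some h
  guru_eq_some_of_delegates_to_voter hvote hvote

end Guru

section DominatingSet

variable {V : Type*} {A : V → V → Prop} {S : Finset V}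

/-- A dominating set of the directed graph with arc relation `A`: every vertex outside `S` has an
arc into `S`. -/
def IsDominating (A : V → V → Prop) (S : Finset V) : Prop :=
  ∀ i ∉ S, ∃ j ∈ S, A i j

lemma IsDominating.exists_retraction (hS : IsDominating A S) :
    ∃ f : V → V, (∀ i, f i ∈ S) ∧ (∀ i ∈ S, f i = i) ∧ ∀ i ∉ S, A i (f i) := by
  have hex (i : V) : ∃ j ∈ S, (i ∈ S → j = i) ∧ (i ∉ S → A i j) := by
    by_cases hi : i ∈ S
    · exact ⟨i, hi, fun _ => rfl, fun h => absurd hi h⟩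
    · obtain ⟨j, hj, hij⟩ := hS i hi
      exact ⟨j, hj, fun h => absurd h hi, fun _ => hij⟩
  choose f hfS hfix harc using hex
  exact ⟨f, hfS, hfix, harc⟩

end DominatingSet

section ArcUtility

variable {n : ℕ} (A : Fin n → Fin n → Prop) [DecidableRel A] (s : Fin n → Option (Fin n))

/-- The utilities of the reduction: `1` for a guru to whom the agent has an arc, `0` otherwise. -/
def arcUtility (i j : Fin n) : ℝ := if A i j then 1 else 0

/-- The agents without an arc to their guru, including those without a guru: the agents whose
utility is `0` when the utilities are `arcUtility A`. -/
def unsatisfied : Finset (Fin n) := {i | ∀ g, guru s i = some g → ¬ A i g}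

variable {A s}

lemma mem_unsatisfied {i : Fin n} :
    i ∈ unsatisfied A s ↔ ∀ g, guru s i = some g → ¬ A i g :=
  Finset.mem_filter_univ i

lemma mem_unsatisfied_iff_of_guru_eq_some {i g : Fin n} (h : guru s i = some g) :
    i ∈ unsatisfied A s ↔ ¬ A i g := by
  simp only [mem_unsatisfied, h, Option.some.injEq, forall_eq']

variable (A s)

lemma pureUtil_arcUtility (i : Fin n) :
    pureUtil (arcUtility A) s i = if i ∈ unsatisfied A s then 0 else 1 := by
  cases h : guru s i with
  | none => simp [pureUtil, mem_unsatisfied, h]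
  | some g => simp [pureUtil, arcUtility, mem_unsatisfied_iff_of_guru_eq_some h, h]

lemma sum_pureUtil_arcUtility :
    ∑ i, pureUtil (arcUtility A) s i = n - #(unsatisfied A s) :=
  calc ∑ i, pureUtil (arcUtility A) s i
      = ∑ i, (1 - if i ∈ unsatisfied A s then (1 : ℝ) else 0) := by
        refine Finset.sum_congr rfl fun i _ => ?_
        rw [pureUtil_arcUtility]
        split_ifs <;> norm_num
    _ = n - #(unsatisfied A s) := by simp

variable {A}

lemma isDominating_unsatisfied (hA : ∀ i, ¬ A i i) : IsDominating A (unsatisfied A s) := by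
  intro i hi
  obtain ⟨g, hg, hig⟩ : ∃ g, guru s i = some g ∧ A i g := by simpa [mem_unsatisfied] using hi
  have hgg : guru s g = some g := guru_eq_some_self_of_guru_eq_some hg
  exact ⟨g, (mem_unsatisfied_iff_of_guru_eq_some hgg).mpr (hA g), hig⟩

lemma IsDominating.exists_unsatisfied_eq (hA : ∀ i, ¬ A i i) {S : Finset (Fin n)}
    (hS : IsDominating A S) : ∃ s, unsatisfied A s = S := by
  obtain ⟨f, hfS, hfix, harc⟩ := hS.exists_retraction
  let s : Fin n → Option (Fin n) := fun i => some (f i)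
  have hguru (i : Fin n) : guru s i = some (f i) :=
    guru_eq_some_of_delegates_to_voter rfl (congrArg some (hfix (f i) (hfS i)))
  refine ⟨s, Finset.ext fun i => ?_⟩
  rw [mem_unsatisfied_iff_of_guru_eq_some (hguru i)]
  refine ⟨not_imp_comm.mp (harc i), fun hi => ?_⟩
  rw [hfix i hi]
  exact hA i

end ArcUtility

/-- Dominating set reduction: with utilities u i j = 1 iff (i,j) is an arc of a
self-loop-free digraph, the digraph has a dominating set of size at most k iff
the game has a pure profile with social welfare at least n - k. -/
theorem stmt13 {n : ℕ} (A : Fin n → Fin n → Prop) [DecidableRel A]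
    (hA : ∀ i, ¬ A i i) (k : ℕ)
    (u : Fin n → Fin n → ℝ) (hu : ∀ i j, u i j = if A i j then 1 else 0) :
    (∃ S : Finset (Fin n), S.card ≤ k ∧ ∀ i ∉ S, ∃ j ∈ S, A i j) ↔
    (∃ s : Fin n → Option (Fin n), (n : ℝ) - k ≤ ∑ i, pureUtil u s i) := by
  obtain rfl : u = arcUtility A := funext₂ hu
  have hwelfare (s : Fin n → Option (Fin n)) :
      (n : ℝ) - k ≤ ∑ i, pureUtil (arcUtility A) s i ↔ #(unsatisfied A s) ≤ k := by
    rw [sum_pureUtil_arcUtility, sub_le_sub_iff_left, Nat.cast_le]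
  simp only [hwelfare]
  constructor
  · rintro ⟨S, hcard, hS⟩
    obtain ⟨s, rfl⟩ := IsDominating.exists_unsatisfied_eq hA hS
    exact ⟨s, hcard⟩
  · rintro ⟨s, hcard⟩
    exact ⟨unsatisfied A s, hcard, isDominating_unsatisfied s hA⟩
end
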